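/- Let ξ ∈ ℝ satisfy |a| < |ξ| < 1 and suppose a sequence of integers {y_n} satisfies y_n = nξ + O(1) as n → ∞. Then lim (1/n) log p_n(φ; y_n) = −H_Q(ξ), where the limit is taken over positive integers n such that n + y_n is even. -/

import Mathlib

/-!
The amplitude after `l` left and `r` right steps is a `2 × 2` matrix `T` applied to `φ`, and the
entries of `T` are explicit combinations of the Meixner polynomials
`F(N, R) = ₂F₁(-N, -R; 1; 1 - 1/c)` with `c = |a|²` (`qw_amp`). Hence `p_n` is at most the squared
Frobenius norm of `T`, and by Cramer's rule at least `|det T|²` divided by it (`det_le_nsq`). The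
determinant is needed because `T` is asymptotically of rank one, so that cancellation for
particular `φ` has to be excluded.

*Upper bound.* The generating function of `F(·, R)` is `(1 - z/c)^R / (1 - z)^(R+1)`. A weighted
`ℓ²` form of Cauchy's estimate on the circle of radius `v ≤ √c` gives
`F(N, R)² ≲ ((1 + v/c)/(1 + v))^(2R) / v^(2N)` (`qwF_energy_step`, `qwF_upper`).

*Lower bound.* Up to a power of `|a|`, `det T` is the Casoratian
`F(N, R+1) F(N+1, R) - F(N, R) F(N+1, R+1)`, which by the Christoffel–Darboux recursion is at least
a constant times `F(N, R) F(N, R+1) / (N + 1)` as long as `(-1)^n F(n, ·)` is positive at `R` and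
`R + 1` for `n ≤ N` (`qwF_cas_lower`). For velocities above `|a|` this positivity holds, and the
three-term recurrence shows more: `(-1)^(n+1) F(n+1, x)` is at least `(-1)^n F(n, x)` divided by
the critical radius for `n + 1`, the minimizer of the upper bound (`qwF_ratio`). Since each
critical radius is a minimizer (`qwPhase_min`), the product of these ratios reproduces the minimal
upper bound up to a polynomial factor (`qwF_lower`, `qwPhase_one`).

The critical radius is a root of a quadratic, and the resulting exponent is `-H_Q` (`qwV_facts`).
Both bounds for `log p_n / n` therefore converge to `-H_Q(ξ)` (`qw_limit_pos`); negative `ξ` reduces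
to positive `ξ` by reflecting the line (`qwP_reflect`).
-/

open Filter Topology Asymptotics MeasureTheory

noncomputable section

/-- One step of the (column-decomposition) quantum walk `U` on functions `ℤ → ℂ²`:
`(Uf)(x) = P f(x+1) + Q f(x-1)` with `P = [[a,0],[-conj b,0]]`, `Q = [[0,b],[0,conj a]]`. -/
def qwStep (a b : ℂ) (f : ℤ → ℂ × ℂ) : ℤ → ℂ × ℂ := fun x =>
  (a * (f (x + 1)).1 + b * (f (x - 1)).2,
   -(starRingEnd ℂ) b * (f (x + 1)).1 + (starRingEnd ℂ) a * (f (x - 1)).2)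

/-- `δ₀ ⊗ φ : ℤ → ℂ²`. -/
def qwDelta (φ : ℂ × ℂ) : ℤ → ℂ × ℂ := fun x => if x = 0 then φ else 0

/-- Squared norm of a vector in `ℂ²`. -/
def nsq (u : ℂ × ℂ) : ℝ := ‖u.1‖ ^ 2 + ‖u.2‖ ^ 2

/-- Transition probability `p_n(φ; y) = ‖(Uⁿ(δ₀ ⊗ φ))(y)‖²`. -/
def qwP (a b : ℂ) (φ : ℂ × ℂ) (n : ℕ) (y : ℤ) : ℝ :=
  nsq (((qwStep a b)^[n] (qwDelta φ)) y)

/-- `λ_A(φ) = |φ₂|² − |φ₁|² + (1/|a|²)(ab conj(φ₁)φ₂ + conj(ab) φ₁ conj(φ₂))` (a real number). -/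
def lamA (a b : ℂ) (φ : ℂ × ℂ) : ℝ :=
  ‖φ.2‖ ^ 2 - ‖φ.1‖ ^ 2 +
    (a * b * (starRingEnd ℂ) φ.1 * φ.2 +
      (starRingEnd ℂ) a * (starRingEnd ℂ) b * φ.1 * (starRingEnd ℂ) φ.2).re / ‖a‖ ^ 2

/-- `μ(t) = arccos(|a| cos t)`. -/
def muF (a : ℂ) (t : ℝ) : ℝ := Real.arccos (‖a‖ * Real.cos t)

/-- `t(η) = arcsin(|b|η/(|a|√(1 − η²)))`. -/
def tF (a b : ℂ) (η : ℝ) : ℝ := Real.arcsin (‖b‖ * η / (‖a‖ * Real.sqrt (1 - η ^ 2)))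

/-- `θ(η) = 2μ(t(η)) − 2η t(η)`. -/
def thetaF (a b : ℂ) (η : ℝ) : ℝ := 2 * muF a (tF a b η) - 2 * η * tF a b η

/-- The rate function `H_Q(ξ)` on `|a| < |ξ| < 1`. -/
def HQ (a b : ℂ) (ξ : ℝ) : ℝ :=
  2 * |ξ| * Real.log (‖b‖ * |ξ| + Real.sqrt (ξ ^ 2 - ‖a‖ ^ 2)) -
    2 * Real.log (‖b‖ + Real.sqrt (ξ ^ 2 - ‖a‖ ^ 2)) +
    (1 - |ξ|) * Real.log (1 - ξ ^ 2) - 2 * |ξ| * Real.log ‖a‖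

/-! ### The polynomials `F` and their recurrences -/

/-- The Meixner polynomial `M_N(R; 1, c) = ₂F₁(-N, -R; 1; 1 - 1/c)`, written as a finite sum that
is symmetric in `N` and `R`. -/
def qwF (c : ℝ) (N R : ℕ) : ℝ :=
  ∑ j ∈ Finset.range (N + 1), (N.choose j : ℝ) * (R.choose j : ℝ) * (1 - 1 / c) ^ j

lemma qwF_eq_sum (c : ℝ) (N R M : ℕ) (h : N + 1 ≤ M) :
    qwF c N R = ∑ j ∈ Finset.range M, (N.choose j : ℝ) * (R.choose j : ℝ) * (1 - 1 / c) ^ j := by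
  unfold qwF
  refine Finset.sum_subset (by simpa using h) ?_
  intro j _ hj
  simp only [Finset.mem_range, not_lt] at hj
  rw [Nat.choose_eq_zero_of_lt (by omega)]
  simp

lemma qwF_zero_left (c : ℝ) (R : ℕ) : qwF c 0 R = 1 := by simp [qwF]

lemma qwF_zero_right (c : ℝ) (N : ℕ) : qwF c N 0 = 1 := by
  unfold qwF
  rw [Finset.sum_range_succ']
  simp

/-- Pascal's rule in both arguments. -/
lemma qwF_rec (c : ℝ) (N R : ℕ) :
    qwF c (N + 1) (R + 1) = qwF c N (R + 1) + qwF c (N + 1) R - qwF c N R / c := by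
  have e1 := qwF_eq_sum c (N + 1) (R + 1) (N + 2) (by omega)
  have e2 := qwF_eq_sum c N (R + 1) (N + 2) (by omega)
  have e3 := qwF_eq_sum c (N + 1) R (N + 2) (by omega)
  have e4 := qwF_eq_sum c N R (N + 2) (by omega)
  have e5 := qwF_eq_sum c N R (N + 1) (by omega)
  have key : qwF c (N + 1) (R + 1) - qwF c N (R + 1) - qwF c (N + 1) R + qwF c N R
      = (1 - 1 / c) * qwF c N R := by
    nth_rewrite 2 [e5]
    rw [e1, e2, e3, e4, Finset.mul_sum, ← Finset.sum_sub_distrib, ← Finset.sum_sub_distrib,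
      ← Finset.sum_add_distrib, Finset.sum_range_succ']
    simp only [Nat.choose_zero_right, Nat.cast_one, pow_zero]
    rw [show ((1 : ℝ) * 1 * 1 - 1 * 1 * 1 - 1 * 1 * 1 + 1 * 1 * 1) = 0 by norm_num, add_zero]
    refine Finset.sum_congr rfl fun j _ => ?_
    rw [Nat.choose_succ_succ N j, Nat.choose_succ_succ R j]
    push_cast
    ring
  linear_combination key

/-- Both sides equal `∑ j * C(N+1, j) * C(R+1, j) * (1 - 1/c)^j`. -/
lemma qwF_diff (c : ℝ) (N R : ℕ) :
    ((R : ℝ) + 1) * (qwF c (N + 1) (R + 1) - qwF c (N + 1) R)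
      = ((N : ℝ) + 1) * (qwF c (N + 1) (R + 1) - qwF c N (R + 1)) := by
  have e1 := qwF_eq_sum c (N + 1) (R + 1) (N + 2) (by omega)
  have e2 := qwF_eq_sum c N (R + 1) (N + 2) (by omega)
  have e3 := qwF_eq_sum c (N + 1) R (N + 2) (by omega)
  rw [e1, e2, e3, ← Finset.sum_sub_distrib, ← Finset.sum_sub_distrib, Finset.mul_sum,
    Finset.mul_sum]
  refine Finset.sum_congr rfl fun i _ => ?_
  rcases i with _ | j
  · simp
  have h1 : ((N : ℝ) + 1) * (N.choose j : ℝ) = ((N + 1).choose (j + 1) : ℝ) * ((j : ℝ) + 1) := by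
    exact_mod_cast Nat.add_one_mul_choose_eq N j
  have h2 : ((R : ℝ) + 1) * (R.choose j : ℝ) = ((R + 1).choose (j + 1) : ℝ) * ((j : ℝ) + 1) := by
    exact_mod_cast Nat.add_one_mul_choose_eq R j
  have h3 : ((N + 1).choose (j + 1) : ℝ) = (N.choose j : ℝ) + N.choose (j + 1) := by
    exact_mod_cast Nat.choose_succ_succ N j
  have h4 : ((R + 1).choose (j + 1) : ℝ) = (R.choose j : ℝ) + R.choose (j + 1) := by
    exact_mod_cast Nat.choose_succ_succ R j
  have h5 : ((R + 1).choose (j + 1) : ℝ) - R.choose (j + 1) = R.choose j := by linarith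
  have h6 : ((N + 1).choose (j + 1) : ℝ) - N.choose (j + 1) = N.choose j := by linarith
  linear_combination ((1 - 1 / c) ^ (j + 1)) * (((R : ℝ) + 1) * ((N + 1).choose (j + 1) : ℝ) * h5
    - ((N : ℝ) + 1) * ((R + 1).choose (j + 1) : ℝ) * h6
    + ((N + 1).choose (j + 1) : ℝ) * h2 - ((R + 1).choose (j + 1) : ℝ) * h1)

/-- The difference relation `qwF_diff` with `qwF c (N + 1) (R + 1)` eliminated. -/
lemma qwF_diff' (c : ℝ) (N R : ℕ) :
    ((R : ℝ) + 1) * (qwF c N (R + 1) - qwF c N R / c)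
      = ((N : ℝ) + 1) * (qwF c (N + 1) R - qwF c N R / c) := by
  have h1 := qwF_diff c N R
  rw [qwF_rec] at h1
  linear_combination h1

lemma qwF_one (c : ℝ) (hc : c ≠ 0) (x : ℕ) :
    c * qwF c 1 x = c - (1 - c) * x := by
  simp only [qwF, Finset.sum_range_succ, Finset.sum_range_zero]
  simp
  field_simp
  ring

/-- The three-term recurrence of the Meixner polynomials in the degree, at a point `x` beyond the
degree (the derivation divides by `x - n`). -/
lemma qwF_three (c : ℝ) (hc : c ≠ 0) (n x : ℕ) (hx : n + 1 ≤ x) :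
    c * ((n : ℝ) + 2) * qwF c (n + 2) x
      = (((n : ℝ) + 1) + ((n : ℝ) + 2) * c - (1 - c) * x) * qwF c (n + 1) x
        - ((n : ℝ) + 1) * qwF c n x := by
  have h1 := qwF_diff c n x
  have h2 := qwF_diff' c n x
  have h3 := qwF_diff' c (n + 1) x
  have hne : ((x : ℝ) - n) ≠ 0 := by
    have : (n : ℝ) + 1 ≤ x := by exact_mod_cast hx
    intro h; linarith
  have hx1 : ((x : ℝ) + 1) ≠ 0 := by positivity
  apply mul_left_cancel₀ hne
  push_cast at h3
  field_simp at h1 h2 h3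
  linear_combination (-((x:ℝ) - n)) * h3 + c * ((x : ℝ) + 1) * h1 - ((n : ℝ) + 1) * h2

/-- Christoffel–Darboux recursion for the Casoratian of consecutive degrees at `R` and `R + 1`. -/
lemma qwF_cas (c : ℝ) (hc : c ≠ 0) (n R : ℕ) (hx : n + 1 ≤ R) :
    c * ((n : ℝ) + 2) * (qwF c (n + 1) (R + 1) * qwF c (n + 2) R
        - qwF c (n + 1) R * qwF c (n + 2) (R + 1))
      = (1 - c) * (qwF c (n + 1) R * qwF c (n + 1) (R + 1))
        + ((n : ℝ) + 1) * (qwF c n (R + 1) * qwF c (n + 1) R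
          - qwF c n R * qwF c (n + 1) (R + 1)) := by
  have h1 := qwF_three c hc n R hx
  have h2 := qwF_three c hc n (R + 1) (by omega)
  push_cast at h2
  linear_combination qwF c (n + 1) (R + 1) * h1 - qwF c (n + 1) R * h2

/-! ### Closed form of the amplitudes -/

lemma qw_support (a b : ℂ) (φ : ℂ × ℂ) (n : ℕ) :
    ∀ y : ℤ, (n : ℤ) < |y| → (qwStep a b)^[n] (qwDelta φ) y = 0 := by
  induction n with
  | zero =>
    intro y hy
    have : y ≠ 0 := by simpa using hy
    simp [qwDelta, this]
  | succ n ih =>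
    intro y hy
    push_cast at hy
    rw [Function.iterate_succ_apply']
    have h1 : (n : ℤ) < |y + 1| := by
      rcases abs_cases y with h | h <;> rcases abs_cases (y + 1) with h' | h' <;> omega
    have h2 : (n : ℤ) < |y - 1| := by
      rcases abs_cases y with h | h <;> rcases abs_cases (y - 1) with h' | h' <;> omega
    simp [qwStep, ih _ h1, ih _ h2]

/-- `F(l, r - 1)`, with the convention `F(l, -1) = 0`. -/
def qwFr (c : ℝ) (l r : ℕ) : ℝ := if r = 0 then 0 else qwF c l (r - 1)

/-- `F(l - 1, r)`, with the convention `F(-1, r) = 0`. -/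
def qwFl (c : ℝ) (l r : ℕ) : ℝ := if l = 0 then 0 else qwF c (l - 1) r

/-- The amplitude after `l` left and `r` right steps, i.e. at time `l + r` and site `r - l`. -/
lemma qw_amp (a b : ℂ) (ha : a ≠ 0) (hab1 : ‖a‖ ^ 2 + ‖b‖ ^ 2 = 1) (φ : ℂ × ℂ) (n : ℕ) :
    ∀ l r : ℕ, l + r = n → (qwStep a b)^[n] (qwDelta φ) ((r : ℤ) - l) =
      (a ^ l * (starRingEnd ℂ) a ^ r * ((qwF (‖a‖ ^ 2) l r - qwFr (‖a‖ ^ 2) l r : ℝ) : ℂ) * φ.1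
        + b * a ^ l * (starRingEnd ℂ) a ^ r / (starRingEnd ℂ) a * (qwFr (‖a‖ ^ 2) l r : ℂ) * φ.2,
       -(starRingEnd ℂ) b * a ^ l * (starRingEnd ℂ) a ^ r / a * (qwFl (‖a‖ ^ 2) l r : ℂ) * φ.1
        + a ^ l * (starRingEnd ℂ) a ^ r
          * ((qwF (‖a‖ ^ 2) l r - qwFl (‖a‖ ^ 2) l r : ℝ) : ℂ) * φ.2) := by
  have hA : (starRingEnd ℂ) a ≠ 0 := by simpa using ha
  have hc : ((‖a‖ ^ 2 : ℝ) : ℂ) = a * (starRingEnd ℂ) a := by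
    rw [Complex.mul_conj, Complex.normSq_eq_norm_sq]
  have hb : b * (starRingEnd ℂ) b = 1 - a * (starRingEnd ℂ) a := by
    rw [← hc, Complex.mul_conj, Complex.normSq_eq_norm_sq, ← Complex.ofReal_one,
      ← Complex.ofReal_sub]
    congr 1
    linarith
  induction n with
  | zero =>
    intro l r h
    obtain ⟨rfl, rfl⟩ : l = 0 ∧ r = 0 := by omega
    simp [qwDelta, qwFr, qwFl, qwF_zero_left]
  | succ n ih =>
    intro l r h
    rw [Function.iterate_succ_apply']
    have hR := fun l r => congrArg (Complex.ofReal) (qwF_rec (‖a‖ ^ 2) l r)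
    simp only [Complex.ofReal_sub, Complex.ofReal_add, Complex.ofReal_div] at hR
    rw [hc] at hR
    rcases l with _ | l
    · rcases r with _ | r
      · omega
      · have e1 : (qwStep a b)^[n] (qwDelta φ) (((r + 1 : ℕ) : ℤ) - (0 : ℕ) + 1) = 0 := by
          apply qw_support
          rw [abs_of_nonneg] <;> push_cast <;> omega
        have e2 := ih 0 r (by omega)
        have e3 : ((r + 1 : ℕ) : ℤ) - (0 : ℕ) - 1 = (r : ℤ) - (0 : ℕ) := by push_cast; ring
        simp only [qwStep, e1, e3, e2]
        simp [qwFr, qwFl, qwF_zero_left]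
        constructor
        · field_simp
          ring
        · ring
    · rcases r with _ | r
      · have e1 : (qwStep a b)^[n] (qwDelta φ) (((0 : ℕ) : ℤ) - (l + 1 : ℕ) - 1) = 0 := by
          apply qw_support
          rw [abs_of_neg] <;> push_cast <;> omega
        have e2 := ih l 0 (by omega)
        have e3 : ((0 : ℕ) : ℤ) - (l + 1 : ℕ) + 1 = ((0 : ℕ) : ℤ) - l := by push_cast; ring
        simp only [qwStep, e1, e3, e2]
        simp [qwFr, qwFl, qwF_zero_right]
        constructor
        · ring
        · field_simp
          ring
      · have e1 := ih l (r + 1) (by omega)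
        have e2 := ih (l + 1) r (by omega)
        have e3 : ((r + 1 : ℕ) : ℤ) - (l + 1 : ℕ) + 1 = ((r + 1 : ℕ) : ℤ) - l := by
          push_cast; ring
        have e4 : ((r + 1 : ℕ) : ℤ) - (l + 1 : ℕ) - 1 = (r : ℤ) - (l + 1 : ℕ) := by
          push_cast; ring
        simp only [qwStep, e3, e4, e1, e2]
        simp only [qwFr, qwFl, Nat.add_eq_zero_iff, one_ne_zero, and_false, if_false,
          Nat.add_sub_cancel, Complex.ofReal_sub, hR]
        rw [Prod.mk.injEq]
        constructor
        · field_simp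
          linear_combination (-a ^ (l + 1) * (starRingEnd ℂ) a ^ (r + 1)
            * (qwF (‖a‖ ^ 2) l r : ℂ) * φ.1) * hb
        · field_simp
          linear_combination (-a ^ (l + 1) * (starRingEnd ℂ) a ^ (r + 1)
            * (qwF (‖a‖ ^ 2) l r : ℂ) * φ.2) * hb

/-! ### Upper bound: a weighted `ℓ²` estimate -/

/-- Multiplication of a generating function by `(1 - z/c)/(1 - z)` has norm at most
`(1 + v/c)/(1 + v)` on the circle `|z| = v`, for `v ≤ √c`; here for truncated coefficient
sequences, where the defect telescopes. -/
lemma qwF_energy_step (c v : ℝ) (hc0 : 0 < c) (hc1 : c < 1) (hv : 0 < v) (hv2 : v ^ 2 ≤ c)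
    (R N : ℕ) :
    ∑ k ∈ Finset.range N, (v ^ k * qwF c k (R + 1)) ^ 2
      ≤ ((1 + v / c) / (1 + v)) ^ 2 * ∑ k ∈ Finset.range N, (v ^ k * qwF c k R) ^ 2 := by
  set q := (1 + v / c) / (1 + v) with hq
  set s : ℕ → ℝ := fun k => ∑ i ∈ Finset.range k, qwF c i R with hs
  have hf : ∀ k, qwF c k R = s (k + 1) - s k := by
    intro k; simp [hs, Finset.sum_range_succ]
  have hg : ∀ k, qwF c k (R + 1) = s (k + 1) - s k / c := by
    intro k
    induction k with
    | zero => simp [hs, qwF_zero_left]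
    | succ k ih =>
      rw [qwF_rec, ih, hf (k + 1), hf k]
      ring
  have hqv : q * (1 + v) = 1 + v / c := by
    rw [hq]; field_simp
  have hq1 : 1 ≤ q := by
    rw [hq, le_div_iff₀ (by positivity)]
    have : v ≤ v / c := by
      rw [le_div_iff₀ hc0]; nlinarith
    linarith
  have hqc : q ^ 2 * c ≤ 1 := by
    -- this is `(c + v) ^ 2 ≤ c * (1 + v) ^ 2`, i.e. `(1 - c) * (c - v ^ 2) ≥ 0`
    have : q ^ 2 * c = (c + v) ^ 2 / (c * (1 + v) ^ 2) := by
      rw [hq]; field_simp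
    rw [this, div_le_one (by positivity)]
    nlinarith
  set κ := v * (1 / c - q ^ 2) with hκ
  have hκ0 : 0 ≤ κ := by
    have : q ^ 2 ≤ 1 / c := by rw [le_div_iff₀ hc0]; exact hqc
    exact mul_nonneg hv.le (by linarith)
  set β := (1 + v / c) * (q - 1) with hβ
  have hβ0 : 0 ≤ β := mul_nonneg (by positivity) (by linarith)
  have hform : ∀ x y : ℝ, q ^ 2 * (x - v * y) ^ 2 - (x - v / c * y) ^ 2
      = κ * (x + y) ^ 2 + β * (x ^ 2 - y ^ 2) := by
    intro x y
    have e : v / c = q * (1 + v) - 1 := by linarith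
    have e' : v * (1 / c) = q * (1 + v) - 1 := by rw [← e]; ring
    have hκ' : κ = q * (1 + v) - 1 - v * q ^ 2 := by rw [hκ, mul_sub, e']
    rw [hκ', hβ, e]
    ring
  have main : ∀ M, β * (v ^ M * s M / v) ^ 2 ≤
      q ^ 2 * ∑ k ∈ Finset.range M, (v ^ k * qwF c k R) ^ 2
        - ∑ k ∈ Finset.range M, (v ^ k * qwF c k (R + 1)) ^ 2 := by
    intro M
    induction M with
    | zero => simp [hs]
    | succ M ih =>
      rw [Finset.sum_range_succ, Finset.sum_range_succ, hf M, hg M]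
      have h := hform (v ^ (M + 1) * s (M + 1) / v) (v ^ M * s M / v)
      have e1 : v ^ (M + 1) * s (M + 1) / v - v * (v ^ M * s M / v)
          = v ^ M * (s (M + 1) - s M) := by
        field_simp
        ring
      have e2 : v ^ (M + 1) * s (M + 1) / v - v / c * (v ^ M * s M / v)
          = v ^ M * (s (M + 1) - s M / c) := by
        field_simp
        ring
      rw [e1, e2] at h
      have := mul_nonneg hκ0 (sq_nonneg (v ^ (M + 1) * s (M + 1) / v + v ^ M * s M / v))
      linarith
  have := main N
  have := mul_nonneg hβ0 (sq_nonneg (v ^ N * s N / v))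
  linarith

lemma qwF_upper (c v : ℝ) (hc0 : 0 < c) (hc1 : c < 1) (hv : 0 < v) (hv2 : v ^ 2 ≤ c) (N R : ℕ) :
    (v ^ N * qwF c N R) ^ 2 ≤ (((1 + v / c) / (1 + v)) ^ R) ^ 2 * (1 / (1 - v ^ 2)) := by
  have h1 : ∑ k ∈ Finset.range (N + 1), (v ^ k * qwF c k R) ^ 2
      ≤ (((1 + v / c) / (1 + v)) ^ R) ^ 2 * (1 / (1 - v ^ 2)) := by
    induction R with
    | zero =>
      simp only [qwF_zero_right, mul_one, pow_zero, one_pow, one_mul]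
      have : ∀ k, (v ^ k) ^ 2 = (v ^ 2) ^ k := fun k => by rw [← pow_mul, ← pow_mul, mul_comm]
      simp only [this]
      rw [one_div, ← tsum_geometric_of_lt_one (sq_nonneg v) (by linarith)]
      exact (summable_geometric_of_lt_one (sq_nonneg v) (by linarith)).sum_le_tsum _
        (fun _ _ => by positivity)
    | succ R ih =>
      refine (qwF_energy_step c v hc0 hc1 hv hv2 R (N + 1)).trans ?_
      calc _ ≤ ((1 + v / c) / (1 + v)) ^ 2 *
            ((((1 + v / c) / (1 + v)) ^ R) ^ 2 * (1 / (1 - v ^ 2))) := by gcongr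
        _ = _ := by rw [pow_succ]; ring
  refine le_trans ?_ h1
  exact Finset.single_le_sum (f := fun k => (v ^ k * qwF c k R) ^ 2)
    (fun _ _ => sq_nonneg _) (Finset.self_mem_range_succ N)

/-! ### Lower bound: the saddle point and the ratio recursion -/

/-- The logarithm of the saddle-point bound for `F(n, x)` at radius `v`. -/
def qwPhase (c x n v : ℝ) : ℝ := x * (Real.log (1 + v / c) - Real.log (1 + v)) - n * Real.log v

/-- The critical radius `v₀ ≤ √c` minimizes the saddle-point bound over `(0, √c]`. -/
lemma qwPhase_min (c x n v₀ v : ℝ) (hc0 : 0 < c) (hn : 0 ≤ n)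
    (hv₀ : 0 < v₀) (hv₀2 : v₀ ^ 2 ≤ c) (hcrit : n * (c + v₀) * (1 + v₀) = (1 - c) * x * v₀)
    (hv : 0 < v) (hv2 : v ^ 2 ≤ c) : qwPhase c x n v₀ ≤ qwPhase c x n v := by
  have hder : ∀ u : ℝ, 0 < u → HasDerivAt (qwPhase c x n)
      (x * (1 / c / (1 + u / c) - 1 / (1 + u)) - n * (1 / u)) u := by
    intro u hu
    have h1 : HasDerivAt (fun u : ℝ => Real.log (1 + u / c)) (1 / c / (1 + u / c)) u :=
      (((hasDerivAt_id u).div_const c).const_add 1).log (by positivity)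
    have h2 : HasDerivAt (fun u : ℝ => Real.log (1 + u)) (1 / (1 + u)) u :=
      ((hasDerivAt_id u).const_add 1).log (by simp only [id]; positivity)
    have h3 : HasDerivAt (fun u : ℝ => Real.log u) (1 / u) u := by
      simpa using Real.hasDerivAt_log hu.ne'
    exact ((h1.sub h2).const_mul x).sub (h3.const_mul n)
  have hval : ∀ u : ℝ, 0 < u → x * (1 / c / (1 + u / c) - 1 / (1 + u)) - n * (1 / u)
      = n * (u - v₀) * (c - u * v₀) / (v₀ * u * (c + u) * (1 + u)) := by
    intro u hu
    have e : 1 / c / (1 + u / c) = 1 / (c + u) := by field_simp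
    rw [e]
    field_simp
    linear_combination (-u) * hcrit
  have hcont : ∀ s : Set ℝ, (∀ u ∈ s, 0 < u) → ContinuousOn (qwPhase c x n) s :=
    fun s hs u hu => (hder u (hs u hu)).continuousAt.continuousWithinAt
  have hcu : ∀ u : ℝ, 0 < u → u ^ 2 ≤ c → u * v₀ ≤ c := by
    intro u hu hu2
    nlinarith [sq_nonneg (u - v₀)]
  rcases le_total v v₀ with h | h
  · have hanti : AntitoneOn (qwPhase c x n) (Set.Icc v v₀) := by
      refine antitoneOn_of_deriv_nonpos (convex_Icc _ _)
        (hcont _ fun u hu => lt_of_lt_of_le hv hu.1) ?_ ?_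
      · intro u hu
        rw [interior_Icc] at hu
        exact (hder u (hv.trans hu.1)).differentiableAt.differentiableWithinAt
      · intro u hu
        rw [interior_Icc] at hu
        have hu0 := hv.trans hu.1
        rw [(hder u hu0).deriv, hval u hu0]
        have h1 : u * v₀ ≤ c := by nlinarith [hu.2]
        apply div_nonpos_of_nonpos_of_nonneg _ (by positivity)
        nlinarith [mul_nonneg (mul_nonneg hn (sub_nonneg.2 hu.2.le)) (sub_nonneg.2 h1)]
    exact hanti ⟨le_rfl, h⟩ ⟨h, le_rfl⟩ h
  · have hmono : MonotoneOn (qwPhase c x n) (Set.Icc v₀ v) := by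
      refine monotoneOn_of_deriv_nonneg (convex_Icc _ _)
        (hcont _ fun u hu => lt_of_lt_of_le hv₀ hu.1) ?_ ?_
      · intro u hu
        rw [interior_Icc] at hu
        exact (hder u (hv₀.trans hu.1)).differentiableAt.differentiableWithinAt
      · intro u hu
        rw [interior_Icc] at hu
        have hu0 := hv₀.trans hu.1
        rw [(hder u hu0).deriv, hval u hu0]
        have h1 : u * v₀ ≤ c := hcu u hu0 (by nlinarith [hu.2])
        apply div_nonneg _ (by positivity)
        exact mul_nonneg (mul_nonneg hn (sub_nonneg.2 hu.1.le)) (sub_nonneg.2 h1)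
    exact hmono ⟨le_rfl, h⟩ ⟨h, le_rfl⟩ h

/-- The critical radius increases with `n`. -/
lemma qw_crit_mono (c x n m u w : ℝ) (hn : 0 < n) (hnm : n < m) (hu : 0 < u) (hw : 0 < w)
    (hu2 : u ^ 2 ≤ c) (hcu : n * (c + u) * (1 + u) = (1 - c) * x * u)
    (hcw : m * (c + w) * (1 + w) = (1 - c) * x * w) : u ≤ w := by
  by_contra! h
  have hc0 : 0 < c := lt_of_lt_of_le (by positivity) hu2
  have h1 : n * ((c + u) * (1 + u)) * w = m * ((c + w) * (1 + w)) * u := by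
    linear_combination w * hcu - u * hcw
  have h2 : (c + u) * (1 + u) * w ≤ (c + w) * (1 + w) * u := by
    nlinarith [mul_nonneg (sub_nonneg.2 h.le) (show (0:ℝ) ≤ c - u * w by nlinarith)]
  have h3 : 0 < (c + w) * (1 + w) * u := by positivity
  nlinarith

/-- The ratio of consecutive values of `(-1)^n F(n, x)` is at least the inverse of the critical
radius, as long as the critical radius exists. -/
lemma qwF_ratio (c : ℝ) (hc0 : 0 < c) (x M : ℕ) (hx : M ≤ x) (v : ℕ → ℝ)
    (hv : ∀ n : ℕ, 1 ≤ n → n ≤ M → 0 < v n ∧ v n ^ 2 ≤ c ∧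
      (n : ℝ) * (c + v n) * (1 + v n) = (1 - c) * x * v n) :
    ∀ n, n < M → 0 < (-1) ^ n * qwF c n x ∧
      (-1) ^ n * qwF c n x ≤ v (n + 1) * ((-1) ^ (n + 1) * qwF c (n + 1) x) := by
  intro n
  induction n with
  | zero =>
    intro h
    obtain ⟨h1, h2, h3⟩ := hv 1 le_rfl h
    have := qwF_one c hc0.ne' x
    simp only [qwF_zero_left, pow_zero, zero_add, pow_one]
    refine ⟨by norm_num, ?_⟩
    push_cast at h3
    have e : c * (v 1 * (-1 * qwF c 1 x)) = c + v 1 + v 1 ^ 2 := by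
      linear_combination (-v 1) * this - h3
    have : c * (1 * 1) ≤ c * (v 1 * (-1 * qwF c 1 x)) := by rw [e]; nlinarith
    exact le_of_mul_le_mul_left this hc0
  | succ n ih =>
    intro h
    obtain ⟨i1, i2⟩ := ih (by omega)
    obtain ⟨u1, u2, u3⟩ := hv (n + 1) (by omega) (by omega)
    obtain ⟨w1, w2, w3⟩ := hv (n + 2) (by omega) (by omega)
    have hmono := qw_crit_mono c x ((n + 1 : ℕ) : ℝ) ((n + 2 : ℕ) : ℝ) (v (n + 1)) (v (n + 2))
      (by positivity) (by push_cast; linarith) u1 w1 u2 u3 w3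
    have h3 := qwF_three c hc0.ne' n x (by omega)
    set g0 := (-1) ^ n * qwF c n x with hg0
    set g1 := (-1) ^ (n + 1) * qwF c (n + 1) x with hg1
    set g2 := (-1) ^ (n + 1 + 1) * qwF c (n + 1 + 1) x with hg2
    have hg1pos : 0 < g1 := by
      by_contra! hneg
      nlinarith
    refine ⟨hg1pos, ?_⟩
    have hrec : c * ((n : ℝ) + 2) * g2
        = ((1 - c) * x - ((n : ℝ) + 1) - ((n : ℝ) + 2) * c) * g1 - ((n : ℝ) + 1) * g0 := by
      rw [hg2, hg1, hg0]
      linear_combination ((-1) ^ n : ℝ) * h3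
    push_cast at w3
    set w := v (n + 2) with hw
    have hg0le : g0 ≤ w * g1 := i2.trans (by gcongr)
    have e1 : c * ((n : ℝ) + 2) * (w * g2)
        = (((n : ℝ) + 2) * (c + w) * (1 + w) - w * ((n : ℝ) + 1) - w * ((n : ℝ) + 2) * c) * g1
          - w * ((n : ℝ) + 1) * g0 := by
      linear_combination w * hrec - g1 * w3
    have e2 : w * ((n : ℝ) + 1) * g0 ≤ w * ((n : ℝ) + 1) * (w * g1) := by gcongr
    have e3 : c * ((n : ℝ) + 2) * g1 ≤ c * ((n : ℝ) + 2) * (w * g2) := by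
      rw [e1]
      have : 0 ≤ (w + w ^ 2) * g1 := by positivity
      nlinarith
    exact le_of_mul_le_mul_left e3 (by positivity)

/-- Summing `qwF_ratio`: `(-1)^n F(n, x)` is at least the saddle-point bound for degree `n + 1`,
up to a factor that does not depend on `n`. -/
lemma qwF_lower (c : ℝ) (hc0 : 0 < c) (x M : ℕ) (hx : M ≤ x) (v : ℕ → ℝ)
    (hv : ∀ n : ℕ, 1 ≤ n → n ≤ M → 0 < v n ∧ v n ^ 2 ≤ c ∧
      (n : ℝ) * (c + v n) * (1 + v n) = (1 - c) * x * v n) :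
    ∀ n, n < M → qwPhase c x ((n + 1 : ℕ) : ℝ) (v (n + 1)) - qwPhase c x 1 (v 1)
      ≤ Real.log ((-1) ^ n * qwF c n x) := by
  intro n
  induction n with
  | zero => intro _; simp [qwF_zero_left]
  | succ n ih =>
    intro h
    have i := ih (by omega)
    obtain ⟨r1, r2⟩ := qwF_ratio c hc0 x M hx v hv n (by omega)
    obtain ⟨r3, -⟩ := qwF_ratio c hc0 x M hx v hv (n + 1) h
    obtain ⟨u1, u2, u3⟩ := hv (n + 1) (by omega) (by omega)
    obtain ⟨w1, w2, w3⟩ := hv (n + 2) (by omega) (by omega)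
    have hmin := qwPhase_min c x ((n + 2 : ℕ) : ℝ) (v (n + 2)) (v (n + 1)) hc0 (by positivity)
      w1 w2 w3 u1 u2
    have hstep : qwPhase c x ((n + 2 : ℕ) : ℝ) (v (n + 1))
        = qwPhase c x ((n + 1 : ℕ) : ℝ) (v (n + 1)) - Real.log (v (n + 1)) := by
      simp only [qwPhase]; push_cast; ring
    have hlog := Real.log_le_log r1 r2
    rw [Real.log_mul u1.ne' r3.ne'] at hlog
    have : ((n + 1 + 1 : ℕ) : ℝ) = ((n + 2 : ℕ) : ℝ) := rfl
    rw [this]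
    have : v (n + 1 + 1) = v (n + 2) := rfl
    rw [this]
    linarith

/-- The factor lost in `qwF_lower` is polynomial in `x`. -/
lemma qwPhase_one (c : ℝ) (hc0 : 0 < c) (hc1 : c < 1) (x : ℕ) (hx : 1 ≤ x) (v : ℝ) (hv : 0 < v)
    (hv2 : v ^ 2 ≤ c) (hcrit : 1 * (c + v) * (1 + v) = (1 - c) * x * v) :
    qwPhase c x 1 v ≤ 1 / c - Real.log c + Real.log x := by
  have hx' : (1 : ℝ) ≤ x := by exact_mod_cast hx
  have hx0 : (0 : ℝ) < x := by linarith
  have hcx : c / x ≤ c := div_le_self hc0.le hx'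
  have h := qwPhase_min c x 1 v (c / x) hc0 zero_le_one hv hv2 hcrit (by positivity)
    (by nlinarith [show 0 < c / x by positivity])
  refine h.trans ?_
  unfold qwPhase
  have e1 : Real.log (1 + c / x / c) ≤ 1 / x := by
    have := Real.log_le_sub_one_of_pos (show 0 < 1 + c / x / c by positivity)
    have e : c / x / c = 1 / x := by field_simp
    rw [e] at this ⊢
    linarith
  have e2 : 0 ≤ Real.log (1 + c / x) := Real.log_nonneg (by linarith [show 0 < c / x by positivity])
  have e3 : x * (Real.log (1 + c / x / c) - Real.log (1 + c / x)) ≤ 1 := by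
    calc _ ≤ (x : ℝ) * (1 / x) := by gcongr; linarith
      _ = 1 := by field_simp
  rw [Real.log_div hc0.ne' hx0.ne']
  have : 1 ≤ 1 / c := by rw [le_div_iff₀ hc0]; linarith
  linarith

/-- The Casoratian dominates its last Christoffel–Darboux term. -/
lemma qwF_cas_lower (c : ℝ) (hc0 : 0 < c) (hc1 : c < 1) (R M : ℕ) (hM : M ≤ R)
    (h1 : ∀ n, n < M → 0 < (-1) ^ n * qwF c n R)
    (h2 : ∀ n, n < M → 0 < (-1) ^ n * qwF c n (R + 1)) :
    ∀ n, n < M → (1 - c) * (((-1) ^ n * qwF c n R) * ((-1) ^ n * qwF c n (R + 1))) ≤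
      c * ((n : ℝ) + 1) * (qwF c n (R + 1) * qwF c (n + 1) R
        - qwF c n R * qwF c (n + 1) (R + 1)) := by
  have hsq : ∀ n : ℕ, ((-1) ^ n : ℝ) * (-1) ^ n = 1 := fun n => by
    rw [← mul_pow]; norm_num
  intro n
  induction n with
  | zero =>
    intro _
    have a1 := qwF_one c hc0.ne' R
    have a2 := qwF_one c hc0.ne' (R + 1)
    push_cast at a2
    simp only [qwF_zero_left, zero_add]
    apply le_of_eq
    push_cast
    linear_combination a2 - a1
  | succ n ih =>
    intro h
    have i := ih (by omega)
    have hpos := mul_pos (h1 n (by omega)) (h2 n (by omega))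
    have hW : 0 ≤ qwF c n (R + 1) * qwF c (n + 1) R - qwF c n R * qwF c (n + 1) (R + 1) := by
      have hp : 0 < c * ((n : ℝ) + 1) := by positivity
      have : 0 ≤ (1 - c) * (((-1) ^ n * qwF c n R) * ((-1) ^ n * qwF c n (R + 1))) :=
        mul_nonneg (by linarith) hpos.le
      by_contra! hneg
      nlinarith
    have hrec := qwF_cas c hc0.ne' n R (by omega)
    have e : ((-1) ^ (n + 1) * qwF c (n + 1) R) * ((-1) ^ (n + 1) * qwF c (n + 1) (R + 1))
        = qwF c (n + 1) R * qwF c (n + 1) (R + 1) := by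
      linear_combination (qwF c (n + 1) R * qwF c (n + 1) (R + 1)) * hsq (n + 1)
    rw [e]
    push_cast
    have : 0 ≤ ((n : ℝ) + 1) * (qwF c n (R + 1) * qwF c (n + 1) R
        - qwF c n R * qwF c (n + 1) (R + 1)) := by positivity
    rw [show ((n : ℝ) + 1 + 1) = (n : ℝ) + 2 by ring]
    linarith

/-! ### The critical radius in closed form -/

/-- The critical radius `(|b| t - √(t² - |a|²)) / (|b| + √(t² - |a|²))` at velocity `t`. -/
def qwV (a b : ℂ) (t : ℝ) : ℝ :=
  (‖b‖ * t - Real.sqrt (t ^ 2 - ‖a‖ ^ 2)) / (‖b‖ + Real.sqrt (t ^ 2 - ‖a‖ ^ 2))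

/-- The exponential growth rate of `F` at velocity `t`. -/
def qwRate (a b : ℂ) (t : ℝ) : ℝ := -HQ a b t / 2 - Real.log ‖a‖

lemma qwV_facts (a b : ℂ) (ha : 0 < ‖a‖) (hb : 0 < ‖b‖) (hab1 : ‖a‖ ^ 2 + ‖b‖ ^ 2 = 1)
    (t : ℝ) (h1 : ‖a‖ < t) (h2 : t < 1) :
    0 < qwV a b t ∧ qwV a b t ^ 2 ≤ ‖a‖ ^ 2 ∧
      (1 - t) * (‖a‖ ^ 2 + qwV a b t) * (1 + qwV a b t)
        = (1 - ‖a‖ ^ 2) * (1 + t) * qwV a b t ∧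
      qwPhase (‖a‖ ^ 2) ((1 + t) / 2) ((1 - t) / 2) (qwV a b t) = qwRate a b t := by
  unfold qwRate HQ qwV
  have ht : 0 < t := ha.trans h1
  rw [abs_of_pos ht]
  set α := ‖a‖
  set B := ‖b‖
  set D := Real.sqrt (t ^ 2 - α ^ 2) with hD
  have hD2 : D ^ 2 = t ^ 2 - α ^ 2 := Real.sq_sqrt (by nlinarith)
  have hD0 : 0 < D := Real.sqrt_pos.2 (by nlinarith)
  have hB2 : B ^ 2 = 1 - α ^ 2 := by linarith
  have e1 : (B * t - D) * (B * t + D) = α ^ 2 * (1 - t ^ 2) := by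
    linear_combination t ^ 2 * hB2 - hD2
  have e2 : (B - D) * (B + D) = 1 - t ^ 2 := by linear_combination hB2 - hD2
  have ht2 : 0 < 1 - t ^ 2 := by nlinarith
  have hp : 0 < B * t + D := by positivity
  have hq : 0 < B + D := by positivity
  have hm : 0 < B * t - D := by
    have : 0 < (B * t - D) * (B * t + D) := by rw [e1]; positivity
    exact pos_of_mul_pos_left this hp.le
  have hm' : 0 < B - D := by
    have : 0 < (B - D) * (B + D) := by rw [e2]; positivity
    exact pos_of_mul_pos_left this hq.le
  set v := (B * t - D) / (B + D) with hv
  have hv0 : 0 < v := div_pos hm hq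
  have f1 : 1 + v = B * (1 + t) / (B + D) := by rw [hv]; field_simp; ring
  have f2 : v = α ^ 2 * (1 - t ^ 2) / ((B + D) * (B * t + D)) := by
    rw [hv, ← e1]; field_simp
  have f3 : 1 + v / α ^ 2 = B * (1 + t) / (B * t + D) := by
    rw [f2, ← e2]
    field_simp
    ring
  have f3' : α ^ 2 + v = α ^ 2 * (B * (1 + t) / (B * t + D)) := by
    rw [← f3]; field_simp
  refine ⟨hv0, ?_, ?_, ?_⟩
  · have k1 : v ^ 2 = v * (α ^ 2 * (1 - t ^ 2) / ((B + D) * (B * t + D))) := by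
      rw [← f2]; ring
    rw [k1, ← e2, hv]
    rw [show (B * t - D) / (B + D) * (α ^ 2 * ((B - D) * (B + D)) / ((B + D) * (B * t + D)))
      = α ^ 2 * (((B * t - D) * (B - D)) / ((B + D) * (B * t + D))) by field_simp]
    apply mul_le_of_le_one_right (by positivity)
    rw [div_le_one (by positivity)]
    nlinarith [mul_pos hD0 hb, mul_pos hD0 ht, mul_pos (mul_pos hD0 hb) ht]
  · rw [f3', f1, f2, ← hB2]
    field_simp
    ring
  · unfold qwPhase
    have g1 : Real.log v = 2 * Real.log α + Real.log (1 - t ^ 2)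
        - Real.log (B + D) - Real.log (B * t + D) := by
      rw [f2, Real.log_div (by positivity) (by positivity), Real.log_mul (by positivity) ht2.ne',
        Real.log_mul hq.ne' hp.ne', Real.log_pow]
      push_cast
      ring
    rw [g1, f3, f1, Real.log_div (by positivity) hp.ne', Real.log_div (by positivity) hq.ne']
    ring

/-- The critical radius for `n` left and `x` right steps, and the value of the phase there. -/
lemma qwV_crit (a b : ℂ) (ha : 0 < ‖a‖) (hb : 0 < ‖b‖) (hab1 : ‖a‖ ^ 2 + ‖b‖ ^ 2 = 1)
    (x n : ℝ) (hn : 0 < n) (hx : 0 < x) (h : ‖a‖ * (x + n) < x - n) :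
    0 < qwV a b ((x - n) / (x + n)) ∧ qwV a b ((x - n) / (x + n)) ^ 2 ≤ ‖a‖ ^ 2 ∧
      n * (‖a‖ ^ 2 + qwV a b ((x - n) / (x + n))) * (1 + qwV a b ((x - n) / (x + n)))
        = (1 - ‖a‖ ^ 2) * x * qwV a b ((x - n) / (x + n)) ∧
      qwPhase (‖a‖ ^ 2) x n (qwV a b ((x - n) / (x + n)))
        = (x + n) * qwRate a b ((x - n) / (x + n)) := by
  have hxn : 0 < x + n := by linarith
  obtain ⟨k1, k2, k3, k4⟩ := qwV_facts a b ha hb hab1 ((x - n) / (x + n))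
    (by rw [lt_div_iff₀ hxn]; exact h) (by rw [div_lt_one hxn]; linarith)
  have t1 : 1 - (x - n) / (x + n) = 2 * n / (x + n) := by field_simp; ring
  have t2 : 1 + (x - n) / (x + n) = 2 * x / (x + n) := by field_simp; ring
  rw [t1, t2] at k3 k4
  refine ⟨k1, k2, ?_, ?_⟩
  · field_simp at k3
    linear_combination k3
  · rw [← k4]
    unfold qwPhase
    field_simp

/-- Positivity and the saddle-point lower bound for `(-1)^n F(n, x)`, with explicit exponent. -/
lemma qwF_lower_rate (a b : ℂ) (ha : 0 < ‖a‖) (hb : 0 < ‖b‖) (hab1 : ‖a‖ ^ 2 + ‖b‖ ^ 2 = 1)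
    (x N : ℕ) (h : ‖a‖ * ((x : ℝ) + (N + 1)) < x - (N + 1)) :
    (∀ n, n < N + 1 → 0 < (-1) ^ n * qwF (‖a‖ ^ 2) n x) ∧
    ((x : ℝ) + (N + 1)) * qwRate a b (((x : ℝ) - (N + 1)) / ((x : ℝ) + (N + 1)))
      - (1 / ‖a‖ ^ 2 - Real.log (‖a‖ ^ 2) + Real.log x)
      ≤ Real.log ((-1) ^ N * qwF (‖a‖ ^ 2) N x) := by
  have hc0 : 0 < ‖a‖ ^ 2 := by positivity
  have hc1 : ‖a‖ ^ 2 < 1 := by nlinarith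
  have hxN' : ((N + 1 : ℕ) : ℝ) < x := by
    push_cast
    have : 0 ≤ ‖a‖ * ((x : ℝ) + (N + 1)) := by positivity
    linarith
  have hxN : N + 1 ≤ x := by exact_mod_cast hxN'.le
  have hx0 : (0 : ℝ) < x := lt_of_le_of_lt (by positivity) hxN'
  set v : ℕ → ℝ := fun n => qwV a b (((x : ℝ) - n) / ((x : ℝ) + n)) with hv
  have hvn : ∀ n : ℕ, 1 ≤ n → n ≤ N + 1 → ‖a‖ * ((x : ℝ) + n) < x - n := by
    intro n _ h2
    have : (n : ℝ) ≤ N + 1 := by exact_mod_cast h2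
    nlinarith
  have hvf : ∀ n : ℕ, 1 ≤ n → n ≤ N + 1 → 0 < v n ∧ v n ^ 2 ≤ ‖a‖ ^ 2 ∧
      (n : ℝ) * (‖a‖ ^ 2 + v n) * (1 + v n) = (1 - ‖a‖ ^ 2) * x * v n := by
    intro n h1 h2
    obtain ⟨k1, k2, k3, -⟩ := qwV_crit a b ha hb hab1 x n (by exact_mod_cast h1) hx0 (hvn n h1 h2)
    exact ⟨k1, k2, k3⟩
  refine ⟨fun n hn => (qwF_ratio _ hc0 x (N + 1) hxN v hvf n hn).1, ?_⟩
  have hl := qwF_lower _ hc0 x (N + 1) hxN v hvf N (by omega)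
  obtain ⟨w1, w2, w3⟩ := hvf 1 le_rfl (by omega)
  have h1 := qwPhase_one _ hc0 hc1 x (by omega) (v 1) w1 w2 (by simpa using w3)
  obtain ⟨-, -, -, k4⟩ := qwV_crit a b ha hb hab1 x ((N + 1 : ℕ) : ℝ) (by positivity) hx0
    (hvn (N + 1) (by omega) le_rfl)
  simp only [hv] at hl h1
  rw [k4] at hl
  push_cast at hl
  push_cast at h1
  linarith

/-! ### Two-sided bounds for the transition probability -/

lemma nsq_nonneg (u : ℂ × ℂ) : 0 ≤ nsq u := by unfold nsq; positivity

lemma nsq_mul_le (p q r s : ℂ) (φ : ℂ × ℂ) :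
    nsq (p * φ.1 + q * φ.2, r * φ.1 + s * φ.2)
      ≤ (‖p‖ ^ 2 + ‖q‖ ^ 2 + ‖r‖ ^ 2 + ‖s‖ ^ 2) * nsq φ := by
  have key : ∀ z w : ℂ, ‖z * φ.1 + w * φ.2‖ ^ 2 ≤ (‖z‖ ^ 2 + ‖w‖ ^ 2) * nsq φ := by
    intro z w
    have h := norm_add_le (z * φ.1) (w * φ.2)
    rw [norm_mul, norm_mul] at h
    have h2 : ‖z * φ.1 + w * φ.2‖ ^ 2 ≤ (‖z‖ * ‖φ.1‖ + ‖w‖ * ‖φ.2‖) ^ 2 := by gcongr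
    unfold nsq
    nlinarith [sq_nonneg (‖z‖ * ‖φ.2‖ - ‖w‖ * ‖φ.1‖)]
  have h1 := key p q
  have h2 := key r s
  unfold nsq at *
  simp only at *
  linarith

/-- Cramer's rule: the image of a unit vector is not smaller than the determinant over the
Frobenius norm. -/
lemma det_le_nsq (p q r s : ℂ) (φ : ℂ × ℂ) (hφ : nsq φ = 1) :
    ‖p * s - q * r‖ ^ 2 ≤ (‖p‖ ^ 2 + ‖q‖ ^ 2 + ‖r‖ ^ 2 + ‖s‖ ^ 2)
      * nsq (p * φ.1 + q * φ.2, r * φ.1 + s * φ.2) := by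
  have h := nsq_mul_le s (-q) (-r) p (p * φ.1 + q * φ.2, r * φ.1 + s * φ.2)
  have e : nsq (s * (p * φ.1 + q * φ.2) + -q * (r * φ.1 + s * φ.2),
      -r * (p * φ.1 + q * φ.2) + p * (r * φ.1 + s * φ.2)) = ‖p * s - q * r‖ ^ 2 := by
    have e1 : s * (p * φ.1 + q * φ.2) + -q * (r * φ.1 + s * φ.2) = (p * s - q * r) * φ.1 := by ring
    have e2 : -r * (p * φ.1 + q * φ.2) + p * (r * φ.1 + s * φ.2) = (p * s - q * r) * φ.2 := by ring
    rw [e1, e2]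
    unfold nsq at *
    simp only [norm_mul]
    linear_combination ‖p * s - q * r‖ ^ 2 * hφ
  simp only at h
  rw [e, norm_neg, norm_neg] at h
  linarith

set_option maxHeartbeats 800000 in
/-- Bounds for the transition probability in terms of `F`: the upper bound uses the weighted
estimate at an arbitrary radius, the lower bound the Casoratian. -/
lemma qwP_bounds (a b : ℂ) (ha : 0 < ‖a‖) (hb : 0 < ‖b‖) (hab1 : ‖a‖ ^ 2 + ‖b‖ ^ 2 = 1)
    (φ : ℂ × ℂ) (hφ : nsq φ = 1) (N R : ℕ) (v : ℝ) (hv : 0 < v) (hv2 : v ^ 2 ≤ ‖a‖ ^ 2) :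
    ∃ E : ℝ, E ≤ (‖a‖ ^ (N + R + 2)) ^ 2 * (10 / ‖a‖ ^ 2) *
        ((((1 + v / ‖a‖ ^ 2) / (1 + v)) ^ (R + 1)) ^ 2 * (1 / (1 - v ^ 2)) / (v ^ (N + 1)) ^ 2) ∧
      qwP a b φ (N + R + 2) ((R : ℤ) - N) ≤ E ∧
      ((‖a‖ ^ (N + R + 2)) ^ 2 / ‖a‖ ^ 2 *
        |qwF (‖a‖ ^ 2) N (R + 1) * qwF (‖a‖ ^ 2) (N + 1) R
          - qwF (‖a‖ ^ 2) N R * qwF (‖a‖ ^ 2) (N + 1) (R + 1)|) ^ 2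
        ≤ E * qwP a b φ (N + R + 2) ((R : ℤ) - N) := by
  have hc0 : 0 < ‖a‖ ^ 2 := by positivity
  have hc1 : ‖a‖ ^ 2 < 1 := by nlinarith
  have hb1 : ‖b‖ ^ 2 ≤ 1 := by nlinarith
  have ha0 : a ≠ 0 := norm_pos_iff.1 ha
  have hA : (starRingEnd ℂ) a ≠ 0 := by simpa using ha0
  have hc : ((‖a‖ ^ 2 : ℝ) : ℂ) = a * (starRingEnd ℂ) a := by
    rw [Complex.mul_conj, Complex.normSq_eq_norm_sq]
  have hbb : b * (starRingEnd ℂ) b = 1 - a * (starRingEnd ℂ) a := by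
    rw [← hc, Complex.mul_conj, Complex.normSq_eq_norm_sq, ← Complex.ofReal_one,
      ← Complex.ofReal_sub]
    congr 1
    linarith
  have hamp := qw_amp a b ha0 hab1 φ (N + R + 2) (N + 1) (R + 1) (by omega)
  have hyy : ((R + 1 : ℕ) : ℤ) - (N + 1 : ℕ) = (R : ℤ) - N := by push_cast; ring
  rw [hyy] at hamp
  simp only [qwFr, qwFl, Nat.add_eq_zero_iff, one_ne_zero, and_false, if_false,
    Nat.add_sub_cancel] at hamp
  set c := ‖a‖ ^ 2 with hcdef
  set FE := qwF c (N + 1) (R + 1) with hFE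
  set FA := qwF c (N + 1) R with hFA
  set FB := qwF c N (R + 1) with hFB
  set FC := qwF c N R with hFC
  have hrec : FE = FB + FA - FC / c := qwF_rec c N R
  set q := (1 + v / c) / (1 + v) with hq
  have hq1 : 1 ≤ q := by
    rw [hq, le_div_iff₀ (by positivity)]
    have : v ≤ v / c := by
      rw [le_div_iff₀ hc0]; nlinarith
    linarith
  have hv1 : v ^ 2 < 1 := by linarith
  have hv1' : v ≤ 1 := by nlinarith
  have hvinv : 0 < 1 / (1 - v ^ 2) := by
    apply one_div_pos.2; linarith
  set Z := ((q ^ (R + 1)) ^ 2 * (1 / (1 - v ^ 2)) / (v ^ (N + 1)) ^ 2) with hZ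
  have hvp : 0 < (v ^ (N + 1)) ^ 2 := by positivity
  have bE : FE ^ 2 ≤ Z := by
    rw [hZ, le_div_iff₀ hvp]
    have := qwF_upper c v hc0 hc1 hv hv2 (N + 1) (R + 1)
    rw [← hq, ← hFE] at this
    linarith [mul_pow (v ^ (N + 1)) FE 2]
  have bA : FA ^ 2 ≤ Z := by
    rw [hZ, le_div_iff₀ hvp]
    have := qwF_upper c v hc0 hc1 hv hv2 (N + 1) R
    rw [← hq, ← hFA] at this
    have h2 : (q ^ R) ^ 2 * (1 / (1 - v ^ 2)) ≤ (q ^ (R + 1)) ^ 2 * (1 / (1 - v ^ 2)) := by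
      gcongr
      omega
    linarith [mul_pow (v ^ (N + 1)) FA 2]
  have bB : FB ^ 2 ≤ Z := by
    rw [hZ, le_div_iff₀ hvp]
    have := qwF_upper c v hc0 hc1 hv hv2 N (R + 1)
    rw [← hq, ← hFB] at this
    have h2 : FB ^ 2 * (v ^ (N + 1)) ^ 2 ≤ FB ^ 2 * (v ^ N) ^ 2 := by
      have : v ^ (N + 1) ≤ v ^ N := pow_le_pow_of_le_one hv.le hv1' (by omega)
      gcongr
    linarith [mul_pow (v ^ N) FB 2]
  set T11 := a ^ (N + 1) * (starRingEnd ℂ) a ^ (R + 1) * ((FE - FA : ℝ) : ℂ) with hT11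
  set T12 := b * a ^ (N + 1) * (starRingEnd ℂ) a ^ (R + 1) / (starRingEnd ℂ) a * (FA : ℂ) with hT12
  set T21 := -(starRingEnd ℂ) b * a ^ (N + 1) * (starRingEnd ℂ) a ^ (R + 1) / a * (FB : ℂ) with hT21
  set T22 := a ^ (N + 1) * (starRingEnd ℂ) a ^ (R + 1) * ((FE - FB : ℝ) : ℂ) with hT22
  have hP : qwP a b φ (N + R + 2) ((R : ℤ) - N)
      = nsq (T11 * φ.1 + T12 * φ.2, T21 * φ.1 + T22 * φ.2) := by
    unfold qwP; rw [hamp]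
  have hpow : ‖a‖ ^ (N + 1) * ‖a‖ ^ (R + 1) = ‖a‖ ^ (N + R + 2) := by
    rw [← pow_add]; congr 1; omega
  set m := ‖a‖ ^ (N + R + 2) with hm
  have n11 : ‖T11‖ ^ 2 = m ^ 2 * (FE - FA) ^ 2 := by
    rw [hT11, norm_mul, norm_mul, norm_pow, norm_pow, RCLike.norm_conj, hpow, Complex.norm_real,
      mul_pow, Real.norm_eq_abs, sq_abs]
  have n22 : ‖T22‖ ^ 2 = m ^ 2 * (FE - FB) ^ 2 := by
    rw [hT22, norm_mul, norm_mul, norm_pow, norm_pow, RCLike.norm_conj, hpow, Complex.norm_real,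
      mul_pow, Real.norm_eq_abs, sq_abs]
  have n12 : ‖T12‖ ^ 2 = m ^ 2 * (‖b‖ ^ 2 / c * FA ^ 2) := by
    rw [hT12, norm_mul, norm_div, norm_mul, norm_mul, norm_pow, norm_pow, RCLike.norm_conj,
      Complex.norm_real, mul_assoc ‖b‖, hpow,
      mul_pow, Real.norm_eq_abs, sq_abs, div_pow, mul_pow, ← hcdef]
    ring
  have n21 : ‖T21‖ ^ 2 = m ^ 2 * (‖b‖ ^ 2 / c * FB ^ 2) := by
    rw [hT21, norm_mul, norm_div, norm_mul, norm_mul, norm_pow, norm_pow, norm_neg,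
      RCLike.norm_conj, RCLike.norm_conj,
      Complex.norm_real, mul_assoc ‖b‖, hpow,
      mul_pow, Real.norm_eq_abs, sq_abs, div_pow, mul_pow, ← hcdef]
    ring
  refine ⟨‖T11‖ ^ 2 + ‖T12‖ ^ 2 + ‖T21‖ ^ 2 + ‖T22‖ ^ 2, ?_, ?_, ?_⟩
  · rw [n11, n12, n21, n22]
    have hZ0 : 0 ≤ Z := (sq_nonneg _).trans bE
    have hbc : ‖b‖ ^ 2 / c ≤ 1 / c := by gcongr
    have hc1' : 1 ≤ 1 / c := by rw [le_div_iff₀ hc0]; linarith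
    have hZc : Z ≤ 1 / c * Z := le_mul_of_one_le_left hZ0 hc1'
    have s1 : (FE - FA) ^ 2 ≤ 4 * (1 / c * Z) := by
      linarith [sq_nonneg (FE + FA), sub_sq FE FA, add_sq FE FA]
    have s2 : (FE - FB) ^ 2 ≤ 4 * (1 / c * Z) := by
      linarith [sq_nonneg (FE + FB), sub_sq FE FB, add_sq FE FB]
    have s3 : ‖b‖ ^ 2 / c * FA ^ 2 ≤ 1 / c * Z := by gcongr
    have s4 : ‖b‖ ^ 2 / c * FB ^ 2 ≤ 1 / c * Z := by gcongr
    have e : m ^ 2 * (10 / c) * Z = m ^ 2 * (4 * (1 / c * Z) + 1 / c * Z + 1 / c * Z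
      + 4 * (1 / c * Z)) := by ring
    rw [e, ← mul_add, ← mul_add, ← mul_add]
    gcongr
  · rw [hP]
    have := nsq_mul_le T11 T12 T21 T22 φ
    rwa [hφ, mul_one] at this
  · rw [hP]
    have hdet : T11 * T22 - T12 * T21 = (a ^ (N + 1) * (starRingEnd ℂ) a ^ (R + 1)) ^ 2
        / (a * (starRingEnd ℂ) a) * ((FB * FA - FC * FE : ℝ) : ℂ) := by
      have hreal : (FE - FA) * (FE - FB) + (1 - c) / c * (FA * FB) = 1 / c * (FB * FA - FC * FE) := by
        rw [hrec]; field_simp; ring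
      have hcx := congrArg Complex.ofReal hreal
      push_cast at hcx
      rw [hc] at hcx
      have e : T11 * T22 - T12 * T21 = (a ^ (N + 1) * (starRingEnd ℂ) a ^ (R + 1)) ^ 2 *
          (((FE : ℂ) - FA) * (FE - FB) + (b * (starRingEnd ℂ) b) / (a * (starRingEnd ℂ) a)
            * (FA * FB)) := by
        rw [hT11, hT12, hT21, hT22]
        push_cast
        field_simp
        ring
      rw [e, hbb, hcx]
      push_cast
      ring
    have hn : ‖T11 * T22 - T12 * T21‖ = m ^ 2 / c * |FB * FA - FC * FE| := by
      rw [hdet, norm_mul, norm_div, norm_pow, norm_mul, norm_mul, norm_pow, norm_pow,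
        RCLike.norm_conj, hpow, Complex.norm_real, Real.norm_eq_abs, hcdef, pow_two ‖a‖]
    rw [← hn]
    exact det_le_nsq T11 T12 T21 T22 φ hφ

/-- The logarithm of the upper bound for the transition probability, at time `n`, after `l` left
and `r` right steps, with radius `v`. -/
def qwUp (a : ℂ) (v n r l : ℝ) : ℝ :=
  2 * n * Real.log ‖a‖ + Real.log (10 / ‖a‖ ^ 2 * (1 / (1 - v ^ 2)))
    + 2 * qwPhase (‖a‖ ^ 2) r l v

/-- `qwP_bounds` in logarithmic form. The lower bound is the squared determinant, bounded below by
two values of `F` through the Casoratian, divided by the upper bound. -/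
lemma qw_log_bounds (a b : ℂ) (ha : 0 < ‖a‖) (hb : 0 < ‖b‖) (hab1 : ‖a‖ ^ 2 + ‖b‖ ^ 2 = 1)
    (φ : ℂ × ℂ) (hφ : nsq φ = 1) (v : ℝ) (hv : 0 < v) (hv2 : v ^ 2 ≤ ‖a‖ ^ 2) :
    ∃ C : ℝ, ∀ N R : ℕ, ‖a‖ * ((R : ℝ) + (N + 1)) < R - (N + 1) →
      Real.log (qwP a b φ (N + R + 2) ((R : ℤ) - N))
        ≤ qwUp a v ((N : ℝ) + R + 2) ((R : ℝ) + 1) ((N : ℝ) + 1) ∧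
      2 * (2 * ((N : ℝ) + R + 2) * Real.log ‖a‖ + C
          - 3 * Real.log ((N : ℝ) + R + 2)
          + ((R : ℝ) + (N + 1)) * qwRate a b (((R : ℝ) - (N + 1)) / ((R : ℝ) + (N + 1)))
          + ((N : ℝ) + R + 2) * qwRate a b (((R : ℝ) - N) / ((N : ℝ) + R + 2)))
        - qwUp a v ((N : ℝ) + R + 2) ((R : ℝ) + 1) ((N : ℝ) + 1)
        ≤ Real.log (qwP a b φ (N + R + 2) ((R : ℤ) - N)) := by
  set c := ‖a‖ ^ 2 with hc
  have hc0 : 0 < c := by positivity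
  have hc1 : c < 1 := by nlinarith
  refine ⟨-Real.log c + Real.log ((1 - c) / c) - 2 * (1 / c - Real.log c), ?_⟩
  intro N R h
  obtain ⟨E, hE, hPE, hdet⟩ := qwP_bounds a b ha hb hab1 φ hφ N R v hv hv2
  rw [← hc] at hE hdet
  obtain ⟨p1, l1⟩ := qwF_lower_rate a b ha hb hab1 R N h
  have h' : ‖a‖ * (((R + 1 : ℕ) : ℝ) + (N + 1)) < ((R + 1 : ℕ) : ℝ) - (N + 1) := by
    push_cast
    nlinarith
  obtain ⟨p2, l2⟩ := qwF_lower_rate a b ha hb hab1 (R + 1) N h'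
  rw [← hc] at p1 l1 p2 l2
  have hNR : N + 1 ≤ R := by
    have h0 : 0 ≤ ‖a‖ * ((R : ℝ) + (N + 1)) := by positivity
    have : ((N + 1 : ℕ) : ℝ) ≤ R := by push_cast; linarith
    exact_mod_cast this
  have hcas := qwF_cas_lower c hc0 hc1 R (N + 1) hNR p1 p2 N (by omega)
  set W := qwF c N (R + 1) * qwF c (N + 1) R - qwF c N R * qwF c (N + 1) (R + 1) with hW
  set G1 := (-1) ^ N * qwF c N R with hG1
  set G2 := (-1) ^ N * qwF c N (R + 1) with hG2
  have hG1p : 0 < G1 := p1 N (by omega)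
  have hG2p : 0 < G2 := p2 N (by omega)
  have hN1 : (0 : ℝ) < (N : ℝ) + 1 := by positivity
  have hWl : (1 - c) / c / ((N : ℝ) + 1) * (G1 * G2) ≤ W := by
    rw [div_div, div_mul_eq_mul_div, div_le_iff₀ (by positivity)]
    linarith
  have h1c : 0 < (1 - c) / c := div_pos (by linarith) hc0
  have hWp : 0 < W := lt_of_lt_of_le (by positivity) hWl
  set p := qwP a b φ (N + R + 2) ((R : ℤ) - N) with hp
  rw [abs_of_pos hWp] at hdet
  have hm : 0 < ‖a‖ ^ (N + R + 2) := by positivity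
  set m := ‖a‖ ^ (N + R + 2) with hmdef
  have hdp : 0 < (m ^ 2 / c * W) ^ 2 := by positivity
  have hpnn : 0 ≤ p := nsq_nonneg _
  have hEp : 0 < E * p := lt_of_lt_of_le hdp hdet
  have hpp : 0 < p := lt_of_le_of_ne hpnn (by rintro h0; rw [← h0] at hEp; simp at hEp)
  have hE0 : 0 < E := lt_of_lt_of_le hpp hPE
  have hvv : 0 < 1 - v ^ 2 := by linarith
  have hlogm : Real.log m = ((N : ℝ) + R + 2) * Real.log ‖a‖ := by
    rw [hmdef, Real.log_pow]; push_cast; ring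
  have hUp : Real.log E ≤ qwUp a v ((N : ℝ) + R + 2) ((R : ℝ) + 1) ((N : ℝ) + 1) := by
    refine (Real.log_le_log hE0 hE).trans (le_of_eq ?_)
    have e : m ^ 2 * (10 / c) * ((((1 + v / c) / (1 + v)) ^ (R + 1)) ^ 2 * (1 / (1 - v ^ 2))
        / (v ^ (N + 1)) ^ 2)
        = m ^ 2 * (10 / c * (1 / (1 - v ^ 2))) * (((1 + v / c) / (1 + v)) ^ (R + 1)) ^ 2
          / (v ^ (N + 1)) ^ 2 := by ring
    rw [e, Real.log_div (by positivity) (by positivity), Real.log_mul (by positivity) (by positivity),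
      Real.log_mul (by positivity) (by positivity), Real.log_pow, Real.log_pow, Real.log_pow,
      Real.log_pow, Real.log_pow, Real.log_div (by positivity) (by positivity), Real.log_pow]
    unfold qwUp qwPhase
    rw [← hc]
    push_cast
    ring
  refine ⟨(Real.log_le_log hpp hPE).trans hUp, ?_⟩
  have hd := Real.log_le_log hdp hdet
  rw [Real.log_mul hE0.ne' hpp.ne', Real.log_pow, Real.log_mul (by positivity) hWp.ne',
    Real.log_div (by positivity) hc0.ne', Real.log_pow, hlogm] at hd
  have hWlog := Real.log_le_log (by positivity) hWl
  rw [Real.log_mul (by positivity) (by positivity), Real.log_mul hG1p.ne' hG2p.ne',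
    Real.log_div h1c.ne' hN1.ne'] at hWlog
  have hRp : (0 : ℝ) < R := by
    have : 0 < R := by omega
    exact_mod_cast this
  have hNnn : (0 : ℝ) ≤ N := by positivity
  have b1 : Real.log ((N : ℝ) + 1) ≤ Real.log ((N : ℝ) + R + 2) :=
    Real.log_le_log hN1 (by linarith)
  have b2 : Real.log (R : ℝ) ≤ Real.log ((N : ℝ) + R + 2) :=
    Real.log_le_log hRp (by linarith)
  have b3 : Real.log ((R : ℝ) + 1) ≤ Real.log ((N : ℝ) + R + 2) :=
    Real.log_le_log (by linarith) (by linarith)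
  push_cast at l2 hd
  rw [show (R : ℝ) + 1 + (N + 1) = (N : ℝ) + R + 2 by ring,
    show (R : ℝ) + 1 - (N + 1) = (R : ℝ) - N by ring] at l2
  linarith

/-! ### The limit -/

lemma HQ_continuousAt (a b : ℂ) (ha : 0 < ‖a‖) (hb : 0 < ‖b‖) (ξ : ℝ) (h1 : ‖a‖ < ξ)
    (h2 : ξ < 1) : ContinuousAt (HQ a b) ξ := by
  have hξ : 0 < ξ := ha.trans h1
  have e1 : ‖b‖ * |ξ| + Real.sqrt (ξ ^ 2 - ‖a‖ ^ 2) ≠ 0 := by positivity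
  have e2 : ‖b‖ + Real.sqrt (ξ ^ 2 - ‖a‖ ^ 2) ≠ 0 := by positivity
  have e3 : 1 - ξ ^ 2 ≠ 0 := by nlinarith
  unfold HQ
  fun_prop (disch := assumption)

/-- The limit for positive velocity. -/
lemma qw_limit_pos (a b : ℂ) (ha : 0 < ‖a‖) (hb : 0 < ‖b‖) (hab1 : ‖a‖ ^ 2 + ‖b‖ ^ 2 = 1)
    (φ : ℂ × ℂ) (hφ : nsq φ = 1) (ξ : ℝ) (hξ1 : ‖a‖ < ξ) (hξ2 : ξ < 1)
    (y : ℕ → ℤ) (hy : Tendsto (fun n : ℕ => (y n : ℝ) / n) atTop (𝓝 ξ)) :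
    Tendsto (fun n : ℕ => Real.log (qwP a b φ n (y n)) / (n : ℝ))
      (atTop ⊓ Filter.principal {n : ℕ | Even ((n : ℤ) + y n)})
      (𝓝 (-HQ a b ξ)) := by
  obtain ⟨hv, hv2, -, hph⟩ := qwV_facts a b ha hb hab1 ξ hξ1 hξ2
  set v := qwV a b ξ with hvdef
  obtain ⟨C, hC⟩ := qw_log_bounds a b ha hb hab1 φ hφ v hv hv2
  have hinv : Tendsto (fun n : ℕ => 1 / (n : ℝ)) atTop (𝓝 0) := tendsto_one_div_atTop_nhds_zero_nat
  have hlog : Tendsto (fun n : ℕ => Real.log (n : ℝ) / n) atTop (𝓝 0) := by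
    have := (Real.tendsto_pow_log_div_mul_add_atTop 1 0 1 one_ne_zero).comp
      (tendsto_natCast_atTop_atTop (R := ℝ))
    simpa [Function.comp_def] using this
  have hy' : Tendsto (fun n : ℕ => ((y n : ℝ) - 1) / ((n : ℝ) - 1)) atTop (𝓝 ξ) := by
    have h : Tendsto (fun n : ℕ => ((y n : ℝ) / n - 1 / n) / (1 - 1 / (n : ℝ))) atTop
        (𝓝 ((ξ - 0) / (1 - 0))) :=
      (hy.sub hinv).div (tendsto_const_nhds.sub hinv) (by norm_num)
    simp only [sub_zero, div_one] at h
    refine h.congr' ?_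
    filter_upwards [eventually_ge_atTop 2] with n hn
    have hn' : (2 : ℝ) ≤ n := by exact_mod_cast hn
    have : (n : ℝ) - 1 ≠ 0 := by linarith
    field_simp
  have hrate : ContinuousAt (qwRate a b) ξ := by
    unfold qwRate
    exact ((HQ_continuousAt a b ha hb ξ hξ1 hξ2).neg.div_const 2).sub continuousAt_const
  -- the upper bound, normalized; `qwPhase` is linear in the pair of step counts
  have hupper : Tendsto (fun n : ℕ => qwUp a v n (((n : ℝ) + y n) / 2) (((n : ℝ) - y n) / 2) / n)
      atTop (𝓝 (-HQ a b ξ)) := by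
    have h : Tendsto (fun n : ℕ => 2 * Real.log ‖a‖
        + Real.log (10 / ‖a‖ ^ 2 * (1 / (1 - v ^ 2))) * (1 / (n : ℝ))
        + 2 * ((1 + (y n : ℝ) / n) / 2 * (Real.log (1 + v / ‖a‖ ^ 2) - Real.log (1 + v))
          - (1 - (y n : ℝ) / n) / 2 * Real.log v)) atTop
        (𝓝 (2 * Real.log ‖a‖
        + Real.log (10 / ‖a‖ ^ 2 * (1 / (1 - v ^ 2))) * 0
        + 2 * ((1 + ξ) / 2 * (Real.log (1 + v / ‖a‖ ^ 2) - Real.log (1 + v))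
          - (1 - ξ) / 2 * Real.log v))) := by
      refine (tendsto_const_nhds.add (hinv.const_mul _)).add (Tendsto.const_mul 2 ?_)
      exact (((hy.const_add 1).div_const 2).mul_const _).sub
        (((hy.const_sub 1).div_const 2).mul_const _)
    have e : 2 * Real.log ‖a‖ + Real.log (10 / ‖a‖ ^ 2 * (1 / (1 - v ^ 2))) * 0
        + 2 * ((1 + ξ) / 2 * (Real.log (1 + v / ‖a‖ ^ 2) - Real.log (1 + v))
          - (1 - ξ) / 2 * Real.log v) = -HQ a b ξ := by
      unfold qwPhase qwRate at hph
      rw [hph]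
      ring
    rw [e] at h
    refine h.congr' ?_
    filter_upwards [eventually_ge_atTop 1] with n hn
    have hn' : (0 : ℝ) < n := by exact_mod_cast hn
    unfold qwUp qwPhase
    field_simp
  have hlower : Tendsto (fun n : ℕ => (2 * (2 * (n : ℝ) * Real.log ‖a‖ + C
          - 3 * Real.log (n : ℝ)
          + ((n : ℝ) - 1) * qwRate a b (((y n : ℝ) - 1) / ((n : ℝ) - 1))
          + (n : ℝ) * qwRate a b ((y n : ℝ) / n))
        - qwUp a v n (((n : ℝ) + y n) / 2) (((n : ℝ) - y n) / 2)) / n)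
      atTop (𝓝 (-HQ a b ξ)) := by
    have h : Tendsto (fun n : ℕ => 2 * (2 * Real.log ‖a‖ + C * (1 / (n : ℝ))
        - 3 * (Real.log (n : ℝ) / n)
        + (1 - 1 / (n : ℝ)) * qwRate a b (((y n : ℝ) - 1) / ((n : ℝ) - 1))
        + qwRate a b ((y n : ℝ) / n))
        - qwUp a v n (((n : ℝ) + y n) / 2) (((n : ℝ) - y n) / 2) / n) atTop
        (𝓝 (2 * (2 * Real.log ‖a‖ + C * 0 - 3 * 0 + (1 - 0) * qwRate a b ξ + qwRate a b ξ)
          - -HQ a b ξ)) := by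
      refine Tendsto.sub (Tendsto.const_mul 2 ?_) hupper
      refine Tendsto.add (Tendsto.add (Tendsto.sub ?_ (hlog.const_mul 3)) ?_) ?_
      · exact tendsto_const_nhds.add (hinv.const_mul C)
      · exact (hinv.const_sub 1).mul (hrate.tendsto.comp hy')
      · exact hrate.tendsto.comp hy
    have e : 2 * (2 * Real.log ‖a‖ + C * 0 - 3 * 0 + (1 - 0) * qwRate a b ξ + qwRate a b ξ)
          - -HQ a b ξ = -HQ a b ξ := by
      unfold qwRate; ring
    rw [e] at h
    refine h.congr' ?_
    filter_upwards [eventually_ge_atTop 1] with n hn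
    have hn' : (0 : ℝ) < n := by exact_mod_cast hn
    field_simp
  have hev : ∀ᶠ n : ℕ in atTop ⊓ Filter.principal {n : ℕ | Even ((n : ℤ) + y n)},
      0 < n ∧ ∃ N R : ℕ, n = N + R + 2 ∧ y n = (R : ℤ) - N ∧
        ‖a‖ * ((R : ℝ) + (N + 1)) < R - (N + 1) := by
    have A1 := hy.eventually_lt_const hξ2
    have A2 := hy'.eventually_const_lt hξ1
    rw [eventually_inf_principal]
    filter_upwards [A1, A2, eventually_ge_atTop 2] with n h1 h2 hn hpar
    have hn' : (2 : ℝ) ≤ n := by exact_mod_cast hn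
    rw [div_lt_one (by linarith)] at h1
    rw [lt_div_iff₀ (by linarith)] at h2
    have h1' : y n < n := by exact_mod_cast h1
    have h3 : (1 : ℝ) < y n := by
      have : 0 < ‖a‖ * ((n : ℝ) - 1) := mul_pos ha (by linarith)
      linarith
    have h3' : 1 < y n := by exact_mod_cast h3
    obtain ⟨k, hk⟩ := hpar
    refine ⟨by omega, (n - k - 1).toNat, (k - 1).toNat, by omega, by omega, ?_⟩
    have r1 : (((n - k - 1).toNat : ℕ) : ℝ) = (n : ℝ) - k - 1 := by
      have : (((n - k - 1 : ℤ).toNat : ℕ) : ℤ) = (n : ℤ) - k - 1 := by omega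
      exact_mod_cast this
    have r2 : (((k - 1).toNat : ℕ) : ℝ) = (k : ℝ) - 1 := by
      have : (((k - 1 : ℤ).toNat : ℕ) : ℤ) = k - 1 := by omega
      exact_mod_cast this
    have hk' : (n : ℝ) + y n = k + k := by exact_mod_cast hk
    rw [r1, r2]
    have e1 : (k : ℝ) - 1 + ((n : ℝ) - k - 1 + 1) = (n : ℝ) - 1 := by ring
    have e2 : (k : ℝ) - 1 - ((n : ℝ) - k - 1 + 1) = (y n : ℝ) - 1 := by linarith
    rw [e1, e2]
    exact h2
  refine tendsto_of_tendsto_of_tendsto_of_le_of_le' (hlower.mono_left inf_le_left)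
    (hupper.mono_left inf_le_left) ?_ ?_
  all_goals
    filter_upwards [hev] with n hn
    obtain ⟨hn0, N, R, hnN, hyn, hcond⟩ := hn
    have hb := hC N R hcond
    have hnr : (N : ℝ) + R + 2 = n := by rw [hnN]; push_cast; ring
    have hyr : (R : ℝ) - N = y n := by rw [hyn]; push_cast; ring
    have hr : (R : ℝ) + 1 = ((n : ℝ) + y n) / 2 := by rw [← hnr, ← hyr]; ring
    have hl : (N : ℝ) + 1 = ((n : ℝ) - y n) / 2 := by rw [← hnr, ← hyr]; ring
    have hs : (R : ℝ) + ((n : ℝ) - y n) / 2 = (n : ℝ) - 1 := by rw [← hnr, ← hyr]; ring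
    have hd : (R : ℝ) - ((n : ℝ) - y n) / 2 = (y n : ℝ) - 1 := by rw [← hnr, ← hyr]; ring
    rw [hnr, hr, hl, hs, hd, hyr, ← hnN, ← hyn] at hb
  · exact div_le_div_of_nonneg_right hb.2 (by positivity)
  · exact div_le_div_of_nonneg_right hb.1 (by positivity)

/-- Reflection of the line together with the exchange of the two components. -/
lemma qwP_reflect (a b : ℂ) (φ : ℂ × ℂ) (n : ℕ) (y : ℤ) :
    qwP a b φ n y = qwP ((starRingEnd ℂ) a) (-(starRingEnd ℂ) b) φ.swap n (-y) := by
  have h : ∀ n : ℕ, ∀ y : ℤ, (qwStep ((starRingEnd ℂ) a) (-(starRingEnd ℂ) b))^[n]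
      (qwDelta φ.swap) (-y) = ((qwStep a b)^[n] (qwDelta φ) y).swap := by
    intro n
    induction n with
    | zero =>
      intro y
      by_cases hy : y = 0 <;> simp [qwDelta, hy]
    | succ n ih =>
      intro y
      rw [Function.iterate_succ_apply', Function.iterate_succ_apply']
      have e1 : -y + 1 = -(y - 1) := by ring
      have e2 : -y - 1 = -(y + 1) := by ring
      simp only [qwStep, e1, e2, ih, Prod.fst_swap, Prod.snd_swap, Prod.swap_prod_mk]
      simp only [map_neg, Complex.conj_conj, neg_neg]
      rw [Prod.mk.injEq]
      constructor <;> ring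
  unfold qwP nsq
  rw [h n y]
  simp only [Prod.fst_swap, Prod.snd_swap]
  ring

/-- Corollary `largeD`: large deviation limit
`lim (1/n) log p_n(φ; y_n) = −H_Q(ξ)` along positive integers `n` with `n + y_n` even. -/
theorem stmt4 (a b : ℂ) (hab1 : ‖a‖ ^ 2 + ‖b‖ ^ 2 = 1) (hab : a * b ≠ 0)
    (φ : ℂ × ℂ) (hφ : nsq φ = 1) (ξ : ℝ) (hξ1 : ‖a‖ < |ξ|) (hξ2 : |ξ| < 1)
    (y : ℕ → ℤ) (hy : (fun n : ℕ => (y n : ℝ) - (n : ℝ) * ξ) =O[atTop] fun _ : ℕ => (1 : ℝ)) :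
    Tendsto (fun n : ℕ => Real.log (qwP a b φ n (y n)) / (n : ℝ))
      (atTop ⊓ Filter.principal {n : ℕ | Even ((n : ℤ) + y n)})
      (𝓝 (-HQ a b ξ)) := by
  have ha : 0 < ‖a‖ := norm_pos_iff.2 (left_ne_zero_of_mul hab)
  have hb : 0 < ‖b‖ := norm_pos_iff.2 (right_ne_zero_of_mul hab)
  have hlim : Tendsto (fun n : ℕ => (y n : ℝ) / n) atTop (𝓝 ξ) := by
    have h1 : (fun n : ℕ => (y n : ℝ) - (n : ℝ) * ξ) =o[atTop] fun n : ℕ => (n : ℝ) :=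
      hy.trans_isLittleO (isLittleO_const_left.2 (Or.inr
        (tendsto_norm_atTop_atTop.comp tendsto_natCast_atTop_atTop)))
    have h2 := h1.tendsto_div_nhds_zero.add_const ξ
    rw [zero_add] at h2
    refine h2.congr' ?_
    filter_upwards [eventually_ge_atTop 1] with n hn
    have hn' : (0 : ℝ) < n := by exact_mod_cast hn
    field_simp
    ring
  rcases le_total 0 ξ with hξ | hξ
  · rw [abs_of_nonneg hξ] at hξ1 hξ2
    exact qw_limit_pos a b ha hb hab1 φ hφ ξ hξ1 hξ2 y hlim
  · rw [abs_of_nonpos hξ] at hξ1 hξ2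
    have hna : ‖(starRingEnd ℂ) a‖ = ‖a‖ := RCLike.norm_conj a
    have hnb : ‖-(starRingEnd ℂ) b‖ = ‖b‖ := by rw [norm_neg, RCLike.norm_conj]
    have hφ' : nsq φ.swap = 1 := by
      rw [← hφ]
      simp only [nsq, Prod.fst_swap, Prod.snd_swap]
      ring
    have hlim' : Tendsto (fun n : ℕ => ((-y n : ℤ) : ℝ) / n) atTop (𝓝 (-ξ)) := by
      refine hlim.neg.congr fun n => ?_
      push_cast
      ring
    have h := qw_limit_pos ((starRingEnd ℂ) a) (-(starRingEnd ℂ) b) (by rwa [hna]) (by rwa [hnb])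
      (by rw [hna, hnb]; exact hab1) φ.swap hφ' (-ξ) (by rwa [hna]) hξ2
      (fun n => -y n) hlim'
    have eH : HQ ((starRingEnd ℂ) a) (-(starRingEnd ℂ) b) (-ξ) = HQ a b ξ := by
      unfold HQ
      rw [hna, hnb, abs_neg, neg_sq]
    have eS : {n : ℕ | Even ((n : ℤ) + -y n)} = {n : ℕ | Even ((n : ℤ) + y n)} := by
      ext n
      simp only [Set.mem_ofPred_eq, Int.even_add, even_neg]
    rw [eH, eS] at h
    refine h.congr fun n => ?_
    rw [← qwP_reflect]
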